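/- arXiv:2402.03134 — 9 statements merged into one kernel-verified Lean document; each statement's English description precedes it below -/
import Mathlib

section
/- Let L be a Stone frame, i.e. a frame in which ⊤ is compact and every element is the supremum of a directed set of complemented elements. Then an element U of L is compact if and only if U is complemented. -/
/-!
A compact `U` is below some member of a directed family of complemented elements with
supremum `U`, hence equal to that member. Conversely, if `U` has complement `W` and `D` is
a directed cover of `U`, then `{d ⊔ W | d ∈ D}` is a directed cover of `⊤`; compactness of
`⊤` gives `d ⊔ W = ⊤` for some `d ∈ D`, and `U ≤ d` because `U` is disjoint from `W`.
-/

/-- `U` is way below `V`: every (inhabited) directed set `D` with `V ≤ sSup D`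
contains some `d` with `U ≤ d`. -/
def WayB {L : Type*} [Order.Frame L] (U V : L) : Prop :=
  ∀ D : Set L, D.Nonempty → DirectedOn (· ≤ ·) D → V ≤ sSup D → ∃ d ∈ D, U ≤ d

/-- An element is compact if it is way below itself. -/
def Cpt {L : Type*} [Order.Frame L] (U : L) : Prop := WayB U U

/-- `U` is well inside `V`. -/
def WellIn {L : Type*} [Order.Frame L] (U V : L) : Prop :=
  ∃ W, U ⊓ W = ⊥ ∧ V ⊔ W = ⊤

/-- `U` is complemented (clopen). -/
def Cplted {L : Type*} [Order.Frame L] (U : L) : Prop :=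
  ∃ W, U ⊓ W = ⊥ ∧ U ⊔ W = ⊤

/-- Scott continuity: preservation of suprema of nonempty directed sets. -/
def ScottCont {L M : Type*} [Order.Frame L] [Order.Frame M] (g : L → M) : Prop :=
  ∀ D : Set L, D.Nonempty → DirectedOn (· ≤ ·) D → g (sSup D) = ⨆ d ∈ D, g d

/-- A nucleus: inflationary, idempotent, binary-meet-preserving endomap. -/
def IsNucleus {L : Type*} [Order.Frame L] (j : L → L) : Prop :=
  (∀ U, U ≤ j U) ∧ (∀ U, j (j U) = j U) ∧ (∀ U V, j (U ⊓ V) = j U ⊓ j V)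

/-- Finite composition of a family of endomaps along a list:
`compL k [i₀, …, iₙ₋₁] U = kᵢₙ₋₁ (⋯ (kᵢ₀ U))`. -/
def compL {L I : Type*} (k : I → L → L) : List I → L → L
  | [], U => U
  | i :: s, U => compL k s (k i U)

/-- in a Stone frame, compact = complemented. -/
theorem stmt_4 {L : Type*} [Order.Frame L]
    (hc : Cpt (⊤ : L))
    (hcov : ∀ U : L, ∃ D : Set L,
      D.Nonempty ∧ DirectedOn (· ≤ ·) D ∧ (∀ d ∈ D, Cplted d) ∧ U = sSup D)
    (U : L) : Cpt U ↔ Cplted U := by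
  constructor
  · intro hU
    obtain ⟨D, hne, hdir, hD, hsup⟩ := hcov U
    obtain ⟨d, hd, hUd⟩ := hU D hne hdir hsup.le
    have hdU : d ≤ U := hsup ▸ le_sSup hd
    exact le_antisymm hUd hdU ▸ hD d hd
  · rintro ⟨W, hbot, htop⟩ D hne hdir hle
    -- Compactness of `⊤` applied to the directed cover `{d ⊔ W | d ∈ D}`.
    obtain ⟨_, ⟨d, hd, rfl⟩, hdW⟩ := hc ((· ⊔ W) '' D) (hne.image _)
      (by
        rintro _ ⟨a, ha, rfl⟩ _ ⟨b, hb, rfl⟩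
        obtain ⟨c, hcD, hac, hbc⟩ := hdir a ha b hb
        exact ⟨c ⊔ W, ⟨c, hcD, rfl⟩, sup_le_sup_right hac W, sup_le_sup_right hbc W⟩)
      (by
        rw [← htop]
        refine sup_le (hle.trans (sSup_le fun d hd => ?_)) ?_
        · exact le_sup_left.trans (le_sSup ⟨d, hd, rfl⟩)
        · obtain ⟨d, hd⟩ := hne
          exact le_sup_right.trans (le_sSup ⟨d, hd, rfl⟩))
    refine ⟨d, hd, ?_⟩
    -- `U ≤ d ⊔ W` and `U` is disjoint from `W`.
    exact Disjoint.left_le_of_le_sup_right (le_top.trans hdW) (disjoint_iff.mpr hbot)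
end

section
/- Every Stone frame is spectral: if L is a frame in which ⊤ is compact and every element is the supremum of a directed set of complemented elements, then ⊤ is compact, the meet of any two compact elements of L is compact, and every element of L is the supremum of a directed set of compact elements. -/
theorem cpt_of_cplted {L : Type*} [Order.Frame L] (hc : Cpt (⊤ : L)) {U : L} (hU : Cplted U) :
    Cpt U := by
  obtain ⟨W, hinf, hsup⟩ := hU
  intro D hne hdir hle
  have hdir' : DirectedOn (· ≤ ·) ((· ⊔ W) '' D) := by
    rintro _ ⟨a, ha, rfl⟩ _ ⟨b, hb, rfl⟩
    obtain ⟨c, hcD, hac, hbc⟩ := hdir a ha b hb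
    exact ⟨c ⊔ W, ⟨c, hcD, rfl⟩, sup_le_sup_right hac W, sup_le_sup_right hbc W⟩
  have htop : (⊤ : L) ≤ sSup ((· ⊔ W) '' D) := by
    rw [← hsup]
    refine sup_le (hle.trans (sSup_le fun d hd => ?_)) ?_
    · exact le_sup_left.trans (le_sSup ⟨d, hd, rfl⟩)
    · obtain ⟨d, hd⟩ := hne
      exact le_sup_right.trans (le_sSup ⟨d, hd, rfl⟩)
  obtain ⟨_, ⟨d, hd, rfl⟩, htd⟩ := hc _ (hne.image _) hdir' htop
  exact ⟨d, hd, Disjoint.left_le_of_le_sup_right (le_top.trans htd) (disjoint_iff.mpr hinf)⟩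

theorem cplted_of_cpt {L : Type*} [Order.Frame L]
    (hcov : ∀ U : L, ∃ D : Set L,
      D.Nonempty ∧ DirectedOn (· ≤ ·) D ∧ (∀ d ∈ D, Cplted d) ∧ U = sSup D)
    {K : L} (hK : Cpt K) : Cplted K := by
  obtain ⟨D, hne, hdir, hD, hKD⟩ := hcov K
  obtain ⟨d, hd, hKd⟩ := hK D hne hdir hKD.le
  have hdK : d ≤ K := hKD ▸ le_sSup hd
  exact le_antisymm hKd hdK ▸ hD d hd

theorem Cplted.inf {L : Type*} [Order.Frame L] {U V : L} (hU : Cplted U) (hV : Cplted V) :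
    Cplted (U ⊓ V) := by
  obtain ⟨W, hW, hW'⟩ := hU
  obtain ⟨X, hX, hX'⟩ := hV
  have h := (IsCompl.of_eq hW hW').inf_sup (IsCompl.of_eq hX hX')
  exact ⟨W ⊔ X, h.inf_eq_bot, h.sup_eq_top⟩

/-- every Stone frame is spectral. -/
theorem stmt_5 {L : Type*} [Order.Frame L]
    (hc : Cpt (⊤ : L))
    (hcov : ∀ U : L, ∃ D : Set L,
      D.Nonempty ∧ DirectedOn (· ≤ ·) D ∧ (∀ d ∈ D, Cplted d) ∧ U = sSup D) :
    Cpt (⊤ : L) ∧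
    (∀ K₁ K₂ : L, Cpt K₁ → Cpt K₂ → Cpt (K₁ ⊓ K₂)) ∧
    (∀ U : L, ∃ D : Set L,
      D.Nonempty ∧ DirectedOn (· ≤ ·) D ∧ (∀ d ∈ D, Cpt d) ∧ U = sSup D) := by
  refine ⟨hc, fun K₁ K₂ h₁ h₂ => ?_, fun U => ?_⟩
  · exact cpt_of_cplted hc ((cplted_of_cpt hcov h₁).inf (cplted_of_cpt hcov h₂))
  · obtain ⟨D, hne, hdir, hD, hU⟩ := hcov U
    exact ⟨D, hne, hdir, fun d hd => cpt_of_cplted hc (hD d hd), hU⟩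
end

section
/- Let L and M be frames such that every element of L is the supremum of the compact elements below it, let h : L → M be a frame homomorphism (preserving ⊤, binary meets, and arbitrary suprema), and let g : M → L be a right adjoint of h. Then g is Scott continuous if and only if h maps compact elements of L to compact elements of M. -/
/-- if every element of `L` is the sup of the compacts below it,
then a frame homomorphism's right adjoint is Scott continuous iff the
homomorphism maps compacts to compacts. -/
theorem stmt_8 {L M : Type*} [Order.Frame L] [Order.Frame M]
    (hL : ∀ U : L, U = sSup {K : L | Cpt K ∧ K ≤ U})
    (h : L → M) (g : M → L)
    (htop : h ⊤ = ⊤)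
    (hmeet : ∀ a b : L, h (a ⊓ b) = h a ⊓ h b)
    (hsup : ∀ S : Set L, h (sSup S) = ⨆ s ∈ S, h s)
    (hadj : GaloisConnection h g) :
    ScottCont g ↔ ∀ K : L, Cpt K → Cpt (h K) := by
  constructor
  · intro hg K hK D hne hdir hle
    have hle' : K ≤ sSup (g '' D) := by
      rw [sSup_image, ← hg D hne hdir]
      exact (hadj _ _).mp hle
    obtain ⟨_, ⟨d, hd, rfl⟩, hKd⟩ :=
      hK (g '' D) (hne.image g) (directedOn_image.mpr (hdir.mono fun _ _ hab => hadj.monotone_u hab)) hle'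
    exact ⟨d, hd, (hadj _ _).mpr hKd⟩
  · intro hc D hne hdir
    apply le_antisymm
    · -- It suffices to bound every compact element below `g (sSup D)`.
      rw [hL (g (sSup D))]
      refine sSup_le ?_
      rintro K ⟨hK, hKle⟩
      obtain ⟨d, hd, hKd⟩ := hc K hK D hne hdir ((hadj _ _).mpr hKle)
      exact le_iSup₂_of_le d hd ((hadj _ _).mp hKd)
    · exact iSup₂_le fun d hd => hadj.monotone_u (le_sSup hd)
end

section
/- Let (k_i)_{i : I} be a family of Scott continuous nuclei on a frame L that is directed with respect to the pointwise order (I is nonempty and for all i, j there is m with k_i ≤ k_m and k_j ≤ k_m pointwise). Then the pointwise supremum U ↦ ⨆_i k_i U is itself a Scott continuous nucleus on L, and it is the least upper bound of the family among nuclei under the pointwise order. -/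
theorem IsNucleus.monotone {L : Type*} [Order.Frame L] {j : L → L} (hj : IsNucleus j) :
    Monotone j := by
  intro U V h
  have := hj.2.2 U V
  rw [inf_eq_left.mpr h] at this
  exact inf_eq_left.mp this.symm

/-- the pointwise supremum of a directed family of Scott
continuous nuclei is a Scott continuous nucleus, and it is the least upper
bound of the family among nuclei in the pointwise order. -/
theorem stmt_10 {L I : Type*} [Order.Frame L] [Nonempty I] (k : I → L → L)
    (hk : ∀ i, IsNucleus (k i)) (sk : ∀ i, ScottCont (k i))
    (hdir : ∀ i j : I, ∃ m : I, (∀ U, k i U ≤ k m U) ∧ (∀ U, k j U ≤ k m U)) :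
    IsNucleus (fun U => ⨆ i, k i U) ∧
    ScottCont (fun U => ⨆ i, k i U) ∧
    (∀ i : I, ∀ U : L, k i U ≤ ⨆ i', k i' U) ∧
    (∀ j : L → L, IsNucleus j → (∀ i U, k i U ≤ j U) →
      ∀ U : L, (⨆ i, k i U) ≤ j U) := by
  refine ⟨⟨fun U => ?_, fun U => le_antisymm ?_ ?_, fun U V => le_antisymm ?_ ?_⟩, ?_,
    fun i U => le_iSup (fun i' => k i' U) i, fun j _ h U => iSup_le fun i => h i U⟩
  · obtain ⟨i⟩ := ‹Nonempty I›
    exact ((hk i).1 U).trans (le_iSup (fun i' => k i' U) i)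
  · refine iSup_le fun i => ?_
    have hD : DirectedOn (· ≤ ·) (Set.range fun j => k j U) := by
      rintro _ ⟨a, rfl⟩ _ ⟨b, rfl⟩
      obtain ⟨m, ha, hb⟩ := hdir a b
      exact ⟨_, ⟨m, rfl⟩, ha U, hb U⟩
    have h := sk i _ (Set.range_nonempty _) hD
    rw [sSup_range, iSup_range] at h
    refine h.le.trans (iSup_le fun j => ?_)
    obtain ⟨m, hi, hj⟩ := hdir i j
    calc k i (k j U) ≤ k m (k j U) := hi _
      _ ≤ k m (k m U) := (hk m).monotone (hj U)
      _ = k m U := (hk m).2.1 U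
      _ ≤ ⨆ i, k i U := le_iSup (fun i' => k i' U) m
  · obtain ⟨i⟩ := ‹Nonempty I›
    exact ((hk i).1 _).trans (le_iSup (fun i' => k i' (⨆ i, k i U)) i)
  · exact iSup_le fun i => ((hk i).2.2 U V).le.trans
      (inf_le_inf (le_iSup (fun i' => k i' U) i) (le_iSup (fun i' => k i' V) i))
  · simp only [iSup_inf_eq, inf_iSup_eq]
    refine iSup_le fun i => iSup_le fun j => ?_
    obtain ⟨m, hi, hj⟩ := hdir i j
    exact (inf_le_inf (hj _) (hi _)).trans
      (((hk m).2.2 U V).ge.trans (le_iSup (fun i' => k i' (U ⊓ V)) m))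
  · intro D hne hD
    simp only [fun i => sk i D hne hD]
    rw [iSup_comm]
    exact iSup_congr fun d => iSup_comm
end

section
/- Let j be a Scott continuous nucleus on a frame L and let (k_i)_{i : I} be a family of Scott continuous nuclei on L. Denote by ⋁(k_i) the nucleus U ↦ ⨆_{s : List I} k_s U, where for a list s = [i₀, …, i_{n-1}], k_s is the composite k_{i_{n-1}} ∘ ⋯ ∘ k_{i₀}. Then the distributivity law j ⊓ ⋁(k_i) = ⋁(j ⊓ k_i) holds, where meets of nuclei are pointwise and ⋁(j ⊓ k_i) is the analogous supremum formed from the family of pointwise meets (j ⊓ k_i)_{i : I}. -/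
theorem le_compL {L I : Type*} [Order.Frame L] {k : I → L → L}
    (hk : ∀ i, IsNucleus (k i)) (s : List I) (U : L) : U ≤ compL k s U := by
  induction s generalizing U with
  | nil => exact le_rfl
  | cons i s ih => exact ((hk i).1 U).trans (ih _)

theorem compL_map_inf {L I : Type*} [Order.Frame L] {k : I → L → L}
    (hk : ∀ i, IsNucleus (k i)) (s : List I) (U V : L) :
    compL k s (U ⊓ V) = compL k s U ⊓ compL k s V := by
  induction s generalizing U V with
  | nil => rfl
  | cons i s ih => simp only [compL, (hk i).2.2, ih]

theorem compL_inf {L I : Type*} [Order.Frame L] {j : L → L} {k : I → L → L}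
    (hj : IsNucleus j) (hk : ∀ i, IsNucleus (k i)) (s : List I) (U : L) :
    compL (fun i V => j V ⊓ k i V) s U = j U ⊓ compL k s U := by
  induction s generalizing U with
  | nil => exact (inf_eq_right.mpr (hj.1 U)).symm
  | cons i s ih =>
    have hle : j U ≤ j (k i U) := by
      rw [← inf_eq_left, ← hj.2.2, inf_eq_left.mpr ((hk i).1 U)]
    have hs : j U ≤ compL k s (j U) := le_compL hk s _
    simp only [compL]
    rw [ih, hj.2.2, hj.2.1, compL_map_inf hk, inf_eq_left.mpr hle, ← inf_assoc,
      inf_eq_left.mpr hs]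

/-- distributivity: `j ⊓ ⋁ᵢ kᵢ = ⋁ᵢ (j ⊓ kᵢ)` for Scott
continuous nuclei, where joins are given by suprema of finite compositions. -/
theorem stmt_12 {L I : Type*} [Order.Frame L] (j : L → L) (k : I → L → L)
    (hj : IsNucleus j) (sj : ScottCont j)
    (hk : ∀ i, IsNucleus (k i)) (sk : ∀ i, ScottCont (k i)) :
    ∀ U : L, j U ⊓ (⨆ s : List I, compL k s U) =
      ⨆ s : List I, compL (fun i V => j V ⊓ k i V) s U := by
  intro U
  simp only [inf_iSup_eq, compL_inf hj hk]
end

section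
/- Let L be a spectral frame (⊤ is compact, the meet of any two compact elements is compact, and every element is the supremum of a directed set of compact elements). Then for every U in L the closed nucleus V ↦ U ⊔ V is Scott continuous, and for every compact K in L the open nucleus V ↦ K ⇨ V (Heyting implication) is Scott continuous. -/
/-- in a spectral frame, every closed nucleus `V ↦ U ⊔ V` is
Scott continuous, and the open nucleus `V ↦ K ⇨ V` is Scott continuous for
every compact `K`. -/
theorem stmt_15 {L : Type*} [Order.Frame L]
    (h1 : Cpt (⊤ : L))
    (h2 : ∀ K₁ K₂ : L, Cpt K₁ → Cpt K₂ → Cpt (K₁ ⊓ K₂))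
    (h3 : ∀ U : L, ∃ D : Set L,
      D.Nonempty ∧ DirectedOn (· ≤ ·) D ∧ (∀ d ∈ D, Cpt d) ∧ U = sSup D) :
    (∀ U : L, ScottCont (fun V => U ⊔ V)) ∧
    (∀ K : L, Cpt K → ScottCont (fun V => K ⇨ V)) := by
  refine ⟨fun U D hne _ => ?_, fun K hK D hne hD => ?_⟩
  · exact le_antisymm
      (sup_le (let ⟨d, hd⟩ := hne; le_sup_left.trans (le_iSup₂ (f := fun d _ => U ⊔ d) d hd))
        (sSup_le fun d hd => le_sup_right.trans (le_iSup₂ (f := fun d _ => U ⊔ d) d hd)))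
      (iSup₂_le fun d hd => sup_le_sup_left (le_sSup hd) U)
  · refine le_antisymm ?_ (iSup₂_le fun d hd => himp_le_himp_left (le_sSup hd))
    obtain ⟨E, -, -, hEc, hE⟩ := h3 (K ⇨ sSup D)
    change K ⇨ sSup D ≤ _
    rw [hE]
    refine sSup_le fun C hC => ?_
    have hCK : C ⊓ K ≤ sSup D := le_himp_iff.1 (hE ▸ le_sSup hC)
    -- `C ⊓ K` is compact, so it already lies below a single member of `D`.
    obtain ⟨d, hd, hle⟩ := h2 C K (hEc C hC) hK D hne hD hCK
    exact (le_himp_iff.2 hle).trans (le_iSup₂ (f := fun d _ => K ⇨ d) d hd)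
end

section
/- Let L be a frame whose top element ⊤ is compact, and let (k_i)_{i : I} be a directed family of nuclei on L (directed with respect to the pointwise order, I nonempty) such that ⨆_i k_i ⊥ = ⊤. Then there exists some i : I with k_i U = ⊤ for all U in L, i.e. some k_i is the top nucleus. -/
/-- in a frame with compact top, if a directed family of nuclei
satisfies `⨆ i, kᵢ ⊥ = ⊤` then some `kᵢ` is the top nucleus. -/
theorem stmt_17 {L I : Type*} [Order.Frame L] [Nonempty I]
    (hc : Cpt (⊤ : L)) (k : I → L → L)
    (hk : ∀ i, IsNucleus (k i))
    (hdir : ∀ i j : I, ∃ m : I, (∀ U, k i U ≤ k m U) ∧ (∀ U, k j U ≤ k m U))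
    (htop : (⨆ i, k i ⊥) = ⊤) :
    ∃ i : I, ∀ U : L, k i U = ⊤ := by
  -- Compactness of `⊤`, applied to the directed set of values `k i ⊥`.
  obtain ⟨_, ⟨i, rfl⟩, hi⟩ := hc (Set.range fun i => k i ⊥) (Set.range_nonempty _)
    (by
      rintro _ ⟨i, rfl⟩ _ ⟨j, rfl⟩
      obtain ⟨m, him, hjm⟩ := hdir i j
      exact ⟨_, ⟨m, rfl⟩, him ⊥, hjm ⊥⟩)
    (by rw [sSup_range, htop])
  refine ⟨i, fun U => top_le_iff.mp (hi.trans ?_)⟩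
  -- Meet preservation makes `k i` monotone.
  have h := (hk i).2.2 ⊥ U
  rw [bot_inf_eq] at h
  exact inf_eq_left.mp h.symm
end

section
/- Let L be a spectral frame (⊤ is compact, the meet of any two compact elements is compact, and every element is the supremum of a directed set of compact elements) and let j be a Scott continuous nucleus on L. Then, in the complete lattice of all nuclei on L, j equals the supremum over all compact elements K of L of the nuclei (closed nucleus of j K) ⊓ (open nucleus of K), i.e. j = ⨆_{K compact} ((V ↦ j K ⊔ V) ⊓ (V ↦ K ⇨ V)), where the meet of nuclei is pointwise. -/
/-- over a spectral frame, every Scott continuous nucleus `j` is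
the supremum, in the pointwise order on nuclei, of the nuclei
`(closed nucleus of j K) ⊓ (open nucleus of K)` for `K` compact: it is an upper
bound of this family, and below every nucleus upper bound. -/
theorem stmt_18 {L : Type*} [Order.Frame L]
    (h1 : Cpt (⊤ : L))
    (h2 : ∀ K₁ K₂ : L, Cpt K₁ → Cpt K₂ → Cpt (K₁ ⊓ K₂))
    (h3 : ∀ U : L, ∃ D : Set L,
      D.Nonempty ∧ DirectedOn (· ≤ ·) D ∧ (∀ d ∈ D, Cpt d) ∧ U = sSup D)
    (j : L → L) (hj : IsNucleus j) (sj : ScottCont j) :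
    (∀ K : L, Cpt K → ∀ V : L, (j K ⊔ V) ⊓ (K ⇨ V) ≤ j V) ∧
    (∀ m : L → L, IsNucleus m →
      (∀ K : L, Cpt K → ∀ V : L, (j K ⊔ V) ⊓ (K ⇨ V) ≤ m V) →
      ∀ V : L, j V ≤ m V) := by
  obtain ⟨infl, -, map_inf⟩ := hj
  have mono : ∀ {U V : L}, U ≤ V → j U ≤ j V := fun {U V} h => by
    have := map_inf U V
    rw [inf_eq_left.mpr h] at this
    exact inf_eq_left.mp this.symm
  refine ⟨fun K _ V => ?_, fun m _ hub V => ?_⟩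
  · rw [inf_sup_right]
    refine sup_le ?_ (inf_le_left.trans (infl V))
    calc j K ⊓ (K ⇨ V) ≤ j K ⊓ j (K ⇨ V) := inf_le_inf_left _ (infl _)
      _ = j (K ⊓ (K ⇨ V)) := (map_inf _ _).symm
      _ ≤ j V := mono inf_himp_le
  · obtain ⟨D, hne, hdir, hcpt, hV⟩ := h3 V
    have hjV : j V = ⨆ d ∈ D, j d := by rw [hV]; exact sj D hne hdir
    rw [hjV]
    refine iSup₂_le fun d hd => le_trans ?_ (hub d (hcpt d hd) V)
    -- Since `d ≤ V`, the open part `d ⇨ V` is `⊤`.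
    have hdV : d ≤ V := hV ▸ le_sSup hd
    rw [himp_eq_top_iff.mpr hdV, inf_top_eq]
    exact le_sup_left
end

section
/- Let A be a spectral frame (⊤ compact, compacts closed under binary meets, every element a supremum of a directed set of compacts) and X a Stone frame (⊤ compact, every element a supremum of a directed set of complemented elements). Let f* : A → X be a frame homomorphism mapping compact elements to compact elements, with right adjoint f_* : X → A. Define, for a Scott continuous nucleus j on A, f̄*(j) := ⨆_{K compact in A} (f*(j K) ⊓ (f*(K) ⇨ ⊥)), and for V in X define f̄_*(V) : A → A by f̄_*(V)(U) := f_*(V ⊔ f*(U)). Then f̄_*(V) is a Scott continuous nucleus on A, and f̄* and f̄_* form a Galois connection: for every Scott continuous nucleus j on A and every V in X, f̄*(j) ≤ V if and only if j U ≤ f̄_*(V)(U) for all U in A. -/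
/-- A compact supremum of a directed set belongs to that set, so in a zero-dimensional frame
compact elements are complemented. -/
theorem Cpt.cplted {X : Type*} [Order.Frame X]
    (hX2 : ∀ U : X, ∃ D : Set X,
      D.Nonempty ∧ DirectedOn (· ≤ ·) D ∧ (∀ d ∈ D, Cplted d) ∧ U = sSup D)
    {K : X} (hK : Cpt K) : Cplted K := by
  obtain ⟨D, hne, hdir, hc, hD⟩ := hX2 K
  obtain ⟨d, hd, hle⟩ := hK D hne hdir hD.le
  have hKd : K = d := le_antisymm hle (hD ▸ le_sSup hd)
  exact hKd ▸ hc d hd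

/-- For complemented `b`, meeting with the Heyting complement of `b` is left adjoint to
joining with `b`. -/
theorem Cplted.inf_himp_bot_le_iff {X : Type*} [Order.Frame X] {b : X} (hb : Cplted b)
    (a V : X) : a ⊓ (b ⇨ ⊥) ≤ V ↔ a ≤ V ⊔ b := by
  obtain ⟨W, hW, hW'⟩ := hb
  have hWle : W ≤ b ⇨ ⊥ := by
    rw [le_himp_iff, inf_comm, hW]
  constructor
  · intro h
    calc a = a ⊓ (b ⊔ W) := by rw [hW', inf_top_eq]
      _ = a ⊓ b ⊔ a ⊓ W := inf_sup_left _ _ _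
      _ ≤ V ⊔ b := sup_le (inf_le_right.trans le_sup_right)
          ((inf_le_inf_left a hWle).trans (h.trans le_sup_left))
  · intro h
    calc a ⊓ (b ⇨ ⊥) ≤ (V ⊔ b) ⊓ (b ⇨ ⊥) := inf_le_inf_right _ h
      _ = V ⊓ (b ⇨ ⊥) ⊔ b ⊓ (b ⇨ ⊥) := inf_sup_right _ _ _
      _ ≤ V := sup_le inf_le_left (inf_himp_le.trans bot_le)

/-- for a spectral frame `A`, a Stone frame `X`, and a compactness
preserving frame homomorphism `f* : A → X` with right adjoint `f_*`, the map
`f̄_*(V) = U ↦ f_*(V ⊔ f*(U))` is a Scott continuous nucleus on `A`, and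
`f̄*(j) := ⨆_{K compact} f*(j K) ⊓ (f*(K) ⇨ ⊥)` is left adjoint to `f̄_*` on
Scott continuous nuclei. -/
theorem stmt_19 {A X : Type*} [Order.Frame A] [Order.Frame X]
    -- `A` is spectral
    (hA1 : Cpt (⊤ : A))
    (hA2 : ∀ K₁ K₂ : A, Cpt K₁ → Cpt K₂ → Cpt (K₁ ⊓ K₂))
    (hA3 : ∀ U : A, ∃ D : Set A,
      D.Nonempty ∧ DirectedOn (· ≤ ·) D ∧ (∀ d ∈ D, Cpt d) ∧ U = sSup D)
    -- `X` is Stone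
    (hX1 : Cpt (⊤ : X))
    (hX2 : ∀ U : X, ∃ D : Set X,
      D.Nonempty ∧ DirectedOn (· ≤ ·) D ∧ (∀ d ∈ D, Cplted d) ∧ U = sSup D)
    -- `f* : A → X` is a frame homomorphism with right adjoint `f_*`
    (fs : A → X) (fst : X → A)
    (htop : fs ⊤ = ⊤)
    (hmeet : ∀ a b : A, fs (a ⊓ b) = fs a ⊓ fs b)
    (hsup : ∀ S : Set A, fs (sSup S) = ⨆ s ∈ S, fs s)
    (hadj : GaloisConnection fs fst)
    -- `f*` maps compacts to compacts
    (hcpt : ∀ K : A, Cpt K → Cpt (fs K)) :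
    (∀ V : X, IsNucleus (fun U : A => fst (V ⊔ fs U)) ∧
      ScottCont (fun U : A => fst (V ⊔ fs U))) ∧
    (∀ j : A → A, IsNucleus j → ScottCont j → ∀ V : X,
      ((⨆ K ∈ {K : A | Cpt K}, fs (j K) ⊓ (fs K ⇨ ⊥)) ≤ V ↔
        ∀ U : A, j U ≤ fst (V ⊔ fs U))) := by
  constructor
  · intro V
    refine ⟨⟨fun U => ?_, fun U => ?_, fun U W => ?_⟩, fun D hne hdir => ?_⟩
    · exact hadj.le_u le_sup_right
    · apply le_antisymm
      · exact hadj.monotone_u (sup_le le_sup_left (hadj.l_u_le _))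
      · exact hadj.le_u le_sup_right
    · change fst (V ⊔ fs (U ⊓ W)) = fst (V ⊔ fs U) ⊓ fst (V ⊔ fs W)
      rw [hmeet, sup_inf_left, hadj.u_inf]
    · apply le_antisymm
      · obtain ⟨E, -, -, hEc, hE⟩ := hA3 (fst (V ⊔ fs (sSup D)))
        change fst (V ⊔ fs (sSup D)) ≤ ⨆ d ∈ D, fst (V ⊔ fs d)
        rw [hE]
        refine sSup_le fun K hK => ?_
        have hKle : fs K ≤ V ⊔ fs (sSup D) := (hadj _ _).2 (hE ▸ le_sSup hK)
        -- `V ⊔ f* (sSup D)` is the supremum of the directed family `V ⊔ f* d`, `d ∈ D`.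
        have hmono : Monotone fun d => V ⊔ fs d := fun a b h =>
          sup_le_sup_left (hadj.monotone_l h) V
        obtain ⟨_, ⟨d, hd, rfl⟩, hle⟩ := hcpt K (hEc K hK) ((fun d => V ⊔ fs d) '' D)
          (hne.image _) (directedOn_image.2 (hdir.mono' fun _ _ _ _ h => hmono h)) (by
            refine hKle.trans (sup_le ?_ ?_)
            · obtain ⟨d, hd⟩ := hne
              exact le_sup_left.trans (le_sSup ⟨d, hd, rfl⟩)
            · rw [hsup]
              exact iSup₂_le fun d hd => le_sup_right.trans (le_sSup ⟨d, hd, rfl⟩))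
        exact (hadj.le_u hle).trans (le_iSup₂ (f := fun d _ => fst (V ⊔ fs d)) d hd)
      · exact iSup₂_le fun d hd =>
          hadj.monotone_u (sup_le_sup_left (hadj.monotone_l (le_sSup hd)) V)
  · intro j _ hj V
    have key : ∀ K : A, Cpt K →
        (fs (j K) ⊓ (fs K ⇨ ⊥) ≤ V ↔ j K ≤ fst (V ⊔ fs K)) := fun K hK =>
      (((hcpt K hK).cplted hX2).inf_himp_bot_le_iff _ _).trans (hadj _ _)
    rw [iSup₂_le_iff]
    constructor
    · intro h U
      obtain ⟨D, hne, hdir, hc, rfl⟩ := hA3 U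
      rw [hj D hne hdir]
      exact iSup₂_le fun K hK => ((key K (hc K hK)).1 (h K (hc K hK))).trans
        (hadj.monotone_u (sup_le_sup_left (hadj.monotone_l (le_sSup hK)) V))
    · exact fun h K hK => (key K hK).2 (h K)
end
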